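/- For every odd integer n ≥ 3, the total number of involutions of {1,2,…,n} that contain the pattern 123 exactly once equals (3/n)·C(n, (n-3)/2); for every even n this number is 0. -/

import Mathlib

/-- The number of fixed points of a permutation of `Fin n`. -/
def fixedPts {n : ℕ} (π : Equiv.Perm (Fin n)) : ℕ :=
  (Finset.univ.filter fun i => π i = i).card

/-- A permutation is an involution if it is its own inverse. -/
def IsInvolution {n : ℕ} (π : Equiv.Perm (Fin n)) : Prop :=
  ∀ i, π (π i) = i

/-- The number of occurrences of the pattern 123 in a permutation of `Fin n`. -/
noncomputable def occ123 {n : ℕ} (π : Equiv.Perm (Fin n)) : ℕ :=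
  Nat.card {t : Fin n × Fin n × Fin n //
    t.1 < t.2.1 ∧ t.2.1 < t.2.2 ∧ (π t.1 < π t.2.1 ∧ π t.2.1 < π t.2.2)}

/-- `i_n(∅;123)`: the number of involutions of `{1, …, n}` containing the pattern
123 exactly once. -/
noncomputable def iCountOnceTotal123 (n : ℕ) : ℕ :=
  Nat.card {π : Equiv.Perm (Fin n) // IsInvolution π ∧ occ123 π = 1}

/-!
An involution `π` permutes the occurrences of 123 in it, since inverting exchanges positions and
values. So the entries of a unique occurrence `a < b < c` are fixed points; moreover any `x < b`
other than `a` has `π x > b`, and any `x > b` other than `c` has `π x < b`, as otherwise there would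
be a second occurrence through `b`. Hence `b` is the middle point, `n = 2 * m + 1` with `m = b`
counted from `0`, and `π` is determined by the points of its graph at the positions `a` and
`m + 1, …, 2 * m`. Their values are `0, …, m - 1` and `c`, so they form a permutation `σ` of
`Fin (m + 1)`. It avoids 123 and does not start with its maximum, and every such `σ` arises.

Classifying 123-avoiding permutations by their first value gives the ballot recursion, so those of
`Fin m` are counted by the Catalan number `C_m`. Among those of `Fin (m + 1)`, exactly `C_m` start
with the maximum, and `C_(m+1) - C_m = 3 / (2 * m + 1) * C(2 * m + 1, m - 1)`.
-/

section Pattern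

variable {α β : Type*}

/-- `f` has an occurrence of the pattern 123 at the positions `i`, `j`, `k`. -/
def Occurs123 [LT α] [LT β] (f : α → β) (i j k : α) : Prop :=
  i < j ∧ j < k ∧ (f i < f j ∧ f j < f k)

/-- `f` avoids the pattern 123, i.e. has no occurrence of it. -/
def Avoids123 [LT α] [LT β] (f : α → β) : Prop :=
  ∀ i j k, ¬ Occurs123 f i j k

/-- The pattern 123 occurs in `f` exactly once, namely at the positions `a`, `b`, `c`. -/
def OccursOnlyAt [LT α] [LT β] (f : α → β) (a b c : α) : Prop :=
  ∀ i j k, Occurs123 f i j k ↔ i = a ∧ j = b ∧ k = c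

lemma OccursOnlyAt.occurs [LT α] [LT β] {f : α → β} {a b c : α} (h : OccursOnlyAt f a b c) :
    Occurs123 f a b c :=
  (h a b c).2 ⟨rfl, rfl, rfl⟩

lemma occurs123_map_iff {ι κ : Type*} [LinearOrder ι] [LinearOrder κ] [Preorder α] [Preorder β]
    {f : α → β} {g : ι → κ} {X : ι → α} {Y : κ → β} (hX : StrictMono X) (hY : StrictMono Y)
    (hfg : ∀ i, f (X i) = Y (g i)) (i j k : ι) :
    Occurs123 f (X i) (X j) (X k) ↔ Occurs123 g i j k := by
  simp only [Occurs123, hfg, hX.lt_iff_lt, hY.lt_iff_lt]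

lemma Occurs123.apply_of_involutive [LT α] {f : α → α} (hf : Function.Involutive f) {i j k : α}
    (h : Occurs123 f i j k) : Occurs123 f (f i) (f j) (f k) := by
  obtain ⟨hij, hjk, hfij, hfjk⟩ := h
  exact ⟨hfij, hfjk, by rwa [hf i, hf j], by rwa [hf j, hf k]⟩

lemma occ123_eq_one_iff {n : ℕ} (π : Equiv.Perm (Fin n)) :
    occ123 π = 1 ↔ ∃ a b c, OccursOnlyAt π a b c := by
  rw [occ123, Nat.card_eq_one_iff_exists]
  constructor
  · rintro ⟨⟨⟨a, b, c⟩, habc⟩, huniq⟩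
    refine ⟨a, b, c, fun i j k => ⟨fun h => ?_, ?_⟩⟩
    · simpa using congrArg Subtype.val (huniq ⟨(i, j, k), h⟩)
    · rintro ⟨rfl, rfl, rfl⟩
      exact habc
  · rintro ⟨a, b, c, h⟩
    exact ⟨⟨(a, b, c), h.occurs⟩, fun ⟨(i, j, k), ht⟩ =>
      Subtype.ext (by simpa using (h i j k).1 ht)⟩

end Pattern

namespace OccursOnlyAt

variable {α : Type*} [LinearOrder α] {f : α → α} {a b c : α}

lemma isFixedPt (h : OccursOnlyAt f a b c) (hf : Function.Involutive f) :
    f a = a ∧ f b = b ∧ f c = c :=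
  (h _ _ _).1 (h.occurs.apply_of_involutive hf)

lemma lt_apply (h : OccursOnlyAt f a b c) (hf : Function.Involutive f) {x : α} (hxb : x < b)
    (hxa : x ≠ a) : b < f x := by
  obtain ⟨-, hbc, -, hfbc⟩ := h.occurs
  have hb : f b = b := (h.isFixedPt hf).2.1
  by_contra! hle
  have hne : f x ≠ b := fun e => hxb.ne (hf.injective (e.trans hb.symm))
  exact hxa ((h x b c).1 ⟨hxb, hbc, hb.symm ▸ lt_of_le_of_ne hle hne, hfbc⟩).1

lemma apply_lt (h : OccursOnlyAt f a b c) (hf : Function.Involutive f) {x : α} (hbx : b < x)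
    (hxc : x ≠ c) : f x < b := by
  obtain ⟨hab, -, hfab, -⟩ := h.occurs
  have hb : f b = b := (h.isFixedPt hf).2.1
  by_contra! hle
  have hne : b ≠ f x := fun e => hbx.ne (hf.injective (hb.trans e))
  exact hxc ((h a b x).1 ⟨hab, hbx, hfab, hb.symm ▸ lt_of_le_of_ne hle hne⟩).2.2

lemma card_Iio_eq_card_Ioi [LocallyFiniteOrderBot α] [LocallyFiniteOrderTop α]
    {π : Equiv.Perm α} (h : OccursOnlyAt π a b c) (hπ : Function.Involutive π) :
    (Finset.Iio b).card = (Finset.Ioi b).card := by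
  obtain ⟨ha, hb, hc⟩ := h.isFixedPt hπ
  obtain ⟨hab, hbc, -⟩ := h.occurs
  -- `π` exchanges the two sides of `b` except for `a` and `c`, which the swap takes care of.
  set ρ : Equiv.Perm α := (Equiv.swap a c).trans π with hρ
  have hρb : ρ b = b := by simp [hρ, Equiv.swap_apply_of_ne_of_ne hab.ne' hbc.ne, hb]
  have hlt : ∀ x, x < b → b < ρ x := fun x hx => by
    rcases eq_or_ne x a with rfl | hxa
    · simpa [hρ, hc] using hbc
    · simpa [hρ, Equiv.swap_apply_of_ne_of_ne hxa (hx.trans hbc).ne] using h.lt_apply hπ hx hxa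
  have hgt : ∀ x, b < x → ρ x < b := fun x hx => by
    rcases eq_or_ne x c with rfl | hxc
    · simpa [hρ, ha] using hab
    · simpa [hρ, Equiv.swap_apply_of_ne_of_ne (hab.trans hx).ne' hxc] using h.apply_lt hπ hx hxc
  refine Finset.card_equiv ρ fun x => ?_
  rw [Finset.mem_Iio, Finset.mem_Ioi]
  refine ⟨hlt x, fun hx => ?_⟩
  rcases lt_trichotomy x b with hxb | rfl | hxb
  · exact hxb
  · exact absurd hx hρb.not_gt
  · exact absurd hx (hgt x hxb).not_gt

lemma eq_two_mul_add_one {n : ℕ} {π : Equiv.Perm (Fin n)} {a b c : Fin n}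
    (h : OccursOnlyAt π a b c) (hπ : Function.Involutive π) : n = 2 * (b : ℕ) + 1 := by
  have hcard := h.card_Iio_eq_card_Ioi hπ
  rw [Fin.card_Iio, Fin.card_Ioi] at hcard
  omega

end OccursOnlyAt

lemma exists_involutive_extending {ι κ α : Type*} {X : ι → α} {Y : κ → α}
    (hX : Function.Injective X) (hY : Function.Injective Y) (σ : ι ≃ κ)
    (hXY : ∀ i j, X i = Y j → σ i = j) :
    ∃ π : Equiv.Perm α, Function.Involutive π ∧ (∀ i, π (X i) = Y (σ i)) ∧
      ∀ x, x ∉ Set.range X → x ∉ Set.range Y → π x = x := by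
  set f : α → α := Function.extend X (Y ∘ σ) (Function.extend Y (X ∘ σ.symm) id) with hf
  have hfX : ∀ i, f (X i) = Y (σ i) := fun i => hX.extend_apply _ _ i
  have hfY : ∀ j, f (Y j) = X (σ.symm j) := fun j => by
    by_cases hj : ∃ i, X i = Y j
    · obtain ⟨i, hi⟩ := hj
      obtain rfl := hXY i j hi
      rw [← hi, hfX, Equiv.symm_apply_apply, hi]
    · rw [hf, Function.extend_apply' _ _ _ hj, hY.extend_apply, Function.comp_apply]
  have hfix : ∀ x, x ∉ Set.range X → x ∉ Set.range Y → f x = x := fun x hxX hxY => by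
    rw [hf, Function.extend_apply' _ _ _ hxX, Function.extend_apply' _ _ _ hxY, id]
  have hinv : Function.Involutive f := fun x => by
    by_cases hxX : x ∈ Set.range X
    · obtain ⟨i, rfl⟩ := hxX
      rw [hfX, hfY, Equiv.symm_apply_apply]
    by_cases hxY : x ∈ Set.range Y
    · obtain ⟨j, rfl⟩ := hxY
      rw [hfY, hfX, Equiv.apply_symm_apply]
    rw [hfix x hxX hxY, hfix x hxX hxY]
  exact ⟨hinv.toPerm, hinv, hfX, hfix⟩

section Blocks

variable {m : ℕ}

/-- The `i`-th element of the lower half `{0, …, m - 1}` of `Fin (2 * m + 1)`. -/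
def low (i : Fin m) : Fin (2 * m + 1) := ⟨i, by omega⟩

/-- The middle element of `Fin (2 * m + 1)`. -/
def mid (m : ℕ) : Fin (2 * m + 1) := ⟨m, by omega⟩

/-- The `i`-th element of the upper half `{m + 1, …, 2 * m}` of `Fin (2 * m + 1)`. -/
def high (i : Fin m) : Fin (2 * m + 1) := ⟨m + 1 + i, by omega⟩

lemma low_strictMono : StrictMono (low (m := m)) := fun _ _ h => h

lemma high_strictMono : StrictMono (high (m := m)) := fun _ _ h => Nat.add_lt_add_left h (m + 1)

lemma low_lt_mid (i : Fin m) : low i < mid m := i.isLt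

lemma mid_lt_high (i : Fin m) : mid m < high i := by
  rw [Fin.lt_def]
  simp only [mid, high]
  omega

lemma low_lt_high (i j : Fin m) : low i < high j := (low_lt_mid i).trans (mid_lt_high j)

lemma exists_low_of_lt_mid {x : Fin (2 * m + 1)} (hx : x < mid m) : ∃ i, low i = x :=
  ⟨⟨x, hx⟩, rfl⟩

lemma exists_high_of_mid_lt {x : Fin (2 * m + 1)} (hx : mid m < x) : ∃ i, high i = x := by
  have hx' : m < x := hx
  refine ⟨⟨x - (m + 1), by omega⟩, Fin.ext ?_⟩
  simp only [high]
  omega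

/-- The upper half of `Fin (2 * m + 1)`, preceded by the element `low a` of the lower half. -/
def consLow (a : Fin m) : Fin (m + 1) → Fin (2 * m + 1) := Fin.cons (low a) high

/-- The lower half of `Fin (2 * m + 1)`, followed by the element `high c` of the upper half. -/
def snocHigh (c : Fin m) : Fin (m + 1) → Fin (2 * m + 1) := Fin.snoc low (high c)

@[simp] lemma consLow_zero (a : Fin m) : consLow a 0 = low a := rfl

@[simp] lemma consLow_succ (a i : Fin m) : consLow a i.succ = high i := rfl

@[simp] lemma snocHigh_castSucc (c i : Fin m) : snocHigh c i.castSucc = low i :=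
  Fin.snoc_castSucc (α := fun _ => Fin (2 * m + 1)) (high c) low i

@[simp] lemma snocHigh_last (c : Fin m) : snocHigh c (Fin.last m) = high c :=
  Fin.snoc_last (α := fun _ => Fin (2 * m + 1)) (high c) low

lemma consLow_strictMono (a : Fin m) : StrictMono (consLow a) := by
  intro i j hij
  obtain ⟨j, rfl⟩ := Fin.exists_succ_eq.2 (Fin.ne_zero_of_lt hij)
  cases i using Fin.cases with
  | zero => exact low_lt_high a j
  | succ i => exact high_strictMono (Fin.succ_lt_succ_iff.1 hij)

lemma snocHigh_strictMono (c : Fin m) : StrictMono (snocHigh c) := by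
  intro i j hij
  obtain ⟨i, rfl⟩ := Fin.exists_castSucc_eq.2 (Fin.ne_last_of_lt hij)
  cases j using Fin.lastCases with
  | last => simpa using low_lt_high i c
  | cast j => simpa using low_strictMono (Fin.castSucc_lt_castSucc_iff.1 hij)

lemma consLow_ne_mid (a : Fin m) (i : Fin (m + 1)) : consLow a i ≠ mid m := by
  cases i using Fin.cases with
  | zero => exact (low_lt_mid a).ne
  | succ i => exact (mid_lt_high i).ne'

lemma snocHigh_ne_mid (c : Fin m) (i : Fin (m + 1)) : snocHigh c i ≠ mid m := by
  cases i using Fin.lastCases with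
  | last => simpa using (mid_lt_high c).ne'
  | cast i => simpa using (low_lt_mid i).ne

lemma mem_range_snocHigh_of_lt_mid (c : Fin m) {x : Fin (2 * m + 1)} (hx : x < mid m) :
    x ∈ Set.range (snocHigh c) := by
  obtain ⟨i, rfl⟩ := exists_low_of_lt_mid hx
  exact ⟨i.castSucc, snocHigh_castSucc c i⟩

lemma mem_range_consLow_of_mid_lt (a : Fin m) {x : Fin (2 * m + 1)} (hx : mid m < x) :
    x ∈ Set.range (consLow a) := by
  obtain ⟨i, rfl⟩ := exists_high_of_mid_lt hx
  exact ⟨i.succ, rfl⟩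

lemma consLow_lt_mid_iff (a : Fin m) (i : Fin (m + 1)) : consLow a i < mid m ↔ i = 0 := by
  cases i using Fin.cases with
  | zero => simpa using low_lt_mid a
  | succ i => simpa using (mid_lt_high i).le

lemma mid_lt_snocHigh_iff (c : Fin m) (i : Fin (m + 1)) :
    mid m < snocHigh c i ↔ i = Fin.last m := by
  cases i using Fin.lastCases with
  | last => simpa using mid_lt_high c
  | cast i => simpa [Fin.castSucc_ne_last] using (low_lt_mid i).le

end Blocks

/-- The involution `π` arises from `σ` by unfolding: `σ` is the pattern formed by the points of
the graph of `π` whose positions lie in `consLow a`, and their values fill `snocHigh c`. These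
points, their mirror images in the diagonal and the centre make up the graph of `π`. -/
structure IsUnfolding {m : ℕ} (σ : Equiv.Perm (Fin (m + 1))) (a c : Fin m)
    (π : Equiv.Perm (Fin (2 * m + 1))) : Prop where
  involutive : Function.Involutive π
  apply_zero : σ 0 = a.castSucc
  apply_succ : σ c.succ = Fin.last m
  apply_mid : π (mid m) = mid m
  apply_consLow : ∀ i, π (consLow a i) = snocHigh c (σ i)

namespace IsUnfolding

variable {m : ℕ} {σ : Equiv.Perm (Fin (m + 1))} {a c : Fin m} {π : Equiv.Perm (Fin (2 * m + 1))}

lemma apply_snocHigh (h : IsUnfolding σ a c π) (j : Fin (m + 1)) :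
    π (snocHigh c j) = consLow a (σ.symm j) := by
  rw [h.involutive.eq_iff, h.apply_consLow, Equiv.apply_symm_apply]

lemma apply_low (h : IsUnfolding σ a c π) : π (low a) = low a := by
  simpa [h.apply_zero] using h.apply_consLow 0

lemma apply_high (h : IsUnfolding σ a c π) : π (high c) = high c := by
  simpa [h.apply_succ] using h.apply_consLow c.succ

lemma mem_range_consLow_of_apply_lt_mid (h : IsUnfolding σ a c π) {x : Fin (2 * m + 1)}
    (hx : π x < mid m) : x ∈ Set.range (consLow a) := by
  obtain ⟨j, hj⟩ := mem_range_snocHigh_of_lt_mid c hx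
  exact ⟨σ.symm j, by rw [← h.apply_snocHigh, hj, h.involutive]⟩

lemma mem_range_snocHigh_of_mid_lt_apply (h : IsUnfolding σ a c π) {x : Fin (2 * m + 1)}
    (hx : mid m < π x) : x ∈ Set.range (snocHigh c) := by
  obtain ⟨i, hi⟩ := mem_range_consLow_of_mid_lt a hx
  exact ⟨σ i, by rw [← h.apply_consLow, hi, h.involutive]⟩

lemma eq_low_of_lt_mid (h : IsUnfolding σ a c π) {x : Fin (2 * m + 1)} (hx : x < mid m)
    (hπx : π x < mid m) : x = low a := by
  obtain ⟨i, rfl⟩ := h.mem_range_consLow_of_apply_lt_mid hπx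
  rw [(consLow_lt_mid_iff a i).1 hx, consLow_zero]

lemma eq_high_of_mid_lt (h : IsUnfolding σ a c π) {x : Fin (2 * m + 1)} (hx : mid m < x)
    (hπx : mid m < π x) : x = high c := by
  obtain ⟨j, rfl⟩ := h.mem_range_snocHigh_of_mid_lt_apply hπx
  rw [(mid_lt_snocHigh_iff c j).1 hx, snocHigh_last]

lemma le_mid_of_occurs123 (h : IsUnfolding σ a c π) (hσ : Avoids123 σ) {i j k : Fin (2 * m + 1)}
    (hocc : Occurs123 π i j k) : j ≤ mid m := by
  by_contra! hj
  have ⟨_, hjk, hπij, hπjk⟩ := hocc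
  obtain ⟨j', rfl⟩ := mem_range_consLow_of_mid_lt a hj
  obtain ⟨k', rfl⟩ := mem_range_consLow_of_mid_lt a (hj.trans hjk)
  have hπj : π (consLow a j') < mid m := by
    rw [h.apply_consLow, h.apply_consLow, (snocHigh_strictMono c).lt_iff_lt] at hπjk
    rw [h.apply_consLow]
    refine lt_of_le_of_ne (not_lt.1 fun hlt => ?_) (snocHigh_ne_mid c _)
    exact (Fin.ne_last_of_lt hπjk) ((mid_lt_snocHigh_iff c _).1 hlt)
  obtain ⟨i', rfl⟩ := h.mem_range_consLow_of_apply_lt_mid (hπij.trans hπj)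
  exact hσ i' j' k' ((occurs123_map_iff (consLow_strictMono a) (snocHigh_strictMono c)
    h.apply_consLow i' j' k').1 hocc)

lemma occursOnlyAt (h : IsUnfolding σ a c π) (hσ : Avoids123 σ) :
    OccursOnlyAt π (low a) (mid m) (high c) := by
  refine fun i j k => ⟨fun hocc => ?_, ?_⟩
  · have hπj : π j ≤ mid m := h.le_mid_of_occurs123 hσ (hocc.apply_of_involutive h.involutive)
    have ⟨hij, hjk, hπij, hπjk⟩ := hocc
    obtain rfl : j = mid m := by
      by_contra hne
      have hj : j < mid m := lt_of_le_of_ne (h.le_mid_of_occurs123 hσ hocc) hne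
      have hπj' : π j < mid m :=
        lt_of_le_of_ne hπj fun e => hne (π.injective (e.trans h.apply_mid.symm))
      have hi := h.eq_low_of_lt_mid (hij.trans hj) (hπij.trans hπj')
      exact hij.ne (hi.trans (h.eq_low_of_lt_mid hj hπj').symm)
    rw [h.apply_mid] at hπij hπjk
    exact ⟨h.eq_low_of_lt_mid hij hπij, rfl, h.eq_high_of_mid_lt hjk hπjk⟩
  · rintro ⟨rfl, rfl, rfl⟩
    rw [Occurs123, h.apply_low, h.apply_mid, h.apply_high]
    exact ⟨low_lt_mid a, mid_lt_high c, low_lt_mid a, mid_lt_high c⟩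

lemma right_unique {a' c' : Fin m} {π' : Equiv.Perm (Fin (2 * m + 1))}
    (h : IsUnfolding σ a c π) (h' : IsUnfolding σ a' c' π') : π = π' := by
  obtain rfl : a = a' := Fin.castSucc_injective m (h.apply_zero.symm.trans h'.apply_zero)
  obtain rfl : c = c' := Fin.succ_injective m <| σ.injective <|
    h.apply_succ.trans h'.apply_succ.symm
  ext1 x
  rcases lt_trichotomy x (mid m) with hx | rfl | hx
  · obtain ⟨j, rfl⟩ := mem_range_snocHigh_of_lt_mid c hx
    rw [h.apply_snocHigh, h'.apply_snocHigh]
  · rw [h.apply_mid, h'.apply_mid]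
  · obtain ⟨i, rfl⟩ := mem_range_consLow_of_mid_lt a hx
    rw [h.apply_consLow, h'.apply_consLow]

lemma left_unique {a' c' : Fin m} {σ' : Equiv.Perm (Fin (m + 1))} (h : IsUnfolding σ a c π)
    (h' : IsUnfolding σ' a' c' π) (hσ : Avoids123 σ) (hσ' : Avoids123 σ') : σ = σ' := by
  obtain ⟨ha, -, hc⟩ := (h'.occursOnlyAt hσ' _ _ _).1 (h.occursOnlyAt hσ).occurs
  obtain rfl := low_strictMono.injective ha
  obtain rfl := high_strictMono.injective hc
  ext1 i
  apply (snocHigh_strictMono c).injective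
  rw [← h.apply_consLow, h'.apply_consLow]

end IsUnfolding

section Unfolding

variable {m : ℕ}

lemma exists_isUnfolding {σ : Equiv.Perm (Fin (m + 1))} (hσ : σ 0 ≠ Fin.last m) :
    ∃ a c π, IsUnfolding σ a c π := by
  obtain ⟨a, ha⟩ := Fin.exists_castSucc_eq.2 hσ
  obtain ⟨c, hc⟩ := Fin.exists_succ_eq.2 fun e : σ.symm (Fin.last m) = 0 =>
    hσ ((Equiv.symm_apply_eq σ).1 e).symm
  have hc' : σ c.succ = Fin.last m := by rw [hc, Equiv.apply_symm_apply]
  have h_overlap : ∀ i j, consLow a i = snocHigh c j → σ i = j := fun i j hij => by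
    cases i using Fin.cases <;> cases j using Fin.lastCases
    case zero.last => simp [(low_lt_high a c).ne] at hij
    case zero.cast j => simpa [← ha] using low_strictMono.injective (by simpa using hij)
    case succ.last i =>
      obtain rfl : i = c := high_strictMono.injective (by simpa using hij)
      exact hc'
    case succ.cast i j => simp [(low_lt_high j i).ne'] at hij
  obtain ⟨π, hπ, hπ_consLow, hπ_fix⟩ := exists_involutive_extending
    (consLow_strictMono a).injective (snocHigh_strictMono c).injective σ h_overlap
  have hπ_mid : π (mid m) = mid m := hπ_fix _
    (fun ⟨i, hi⟩ => consLow_ne_mid a i hi) (fun ⟨j, hj⟩ => snocHigh_ne_mid c j hj)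
  exact ⟨a, c, π, hπ, ha.symm, hc', hπ_mid, hπ_consLow⟩

lemma OccursOnlyAt.exists_isUnfolding {π : Equiv.Perm (Fin (2 * m + 1))}
    {a' b' c' : Fin (2 * m + 1)} (h : OccursOnlyAt π a' b' c') (hπ : Function.Involutive π) :
    ∃ (σ : Equiv.Perm (Fin (m + 1))) (a c : Fin m), Avoids123 σ ∧ IsUnfolding σ a c π := by
  obtain rfl : b' = mid m := Fin.ext (by have := h.eq_two_mul_add_one hπ; simp only [mid]; omega)
  obtain ⟨hab, hbc, -⟩ := h.occurs
  obtain ⟨a, rfl⟩ := exists_low_of_lt_mid hab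
  obtain ⟨c, rfl⟩ := exists_high_of_mid_lt hbc
  obtain ⟨ha, hb, hc⟩ := h.isFixedPt hπ
  have hX := consLow_strictMono a
  have hY := snocHigh_strictMono c
  have h_maps : ∀ i, ∃ j, snocHigh c j = π (consLow a i) := fun i => by
    cases i using Fin.cases with
    | zero => exact ⟨a.castSucc, by simp [ha]⟩
    | succ i =>
      rcases eq_or_ne i c with rfl | hic
      · exact ⟨Fin.last m, by simp [hc]⟩
      · exact mem_range_snocHigh_of_lt_mid c <|
          h.apply_lt hπ (mid_lt_high i) (high_strictMono.injective.ne hic)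
  choose s hs using h_maps
  have hs_inj : Function.Injective s := fun i j hij =>
    hX.injective (π.injective (by rw [← hs, ← hs, hij]))
  let σ : Equiv.Perm (Fin (m + 1)) := .ofBijective s (Finite.injective_iff_bijective.1 hs_inj)
  have hσ : ∀ i, π (consLow a i) = snocHigh c (σ i) := fun i => (hs i).symm
  refine ⟨σ, a, c, fun i j k hocc => ?_, hπ, ?_, ?_, hb, hσ⟩
  · exact consLow_ne_mid a j ((h _ _ _).1 ((occurs123_map_iff hX hY hσ i j k).2 hocc)).2.1
  · exact hY.injective (by rw [← hσ]; simp [ha])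
  · exact hY.injective (by rw [← hσ]; simp [hc])

theorem iCountOnceTotal123_two_mul_add_one (m : ℕ) :
    iCountOnceTotal123 (2 * m + 1) =
      Nat.card {σ : Equiv.Perm (Fin (m + 1)) // Avoids123 σ ∧ σ 0 ≠ Fin.last m} := by
  have h_unfold : ∀ σ : {σ : Equiv.Perm (Fin (m + 1)) // Avoids123 σ ∧ σ 0 ≠ Fin.last m},
      ∃ π : {π : Equiv.Perm (Fin (2 * m + 1)) // IsInvolution π ∧ occ123 π = 1},
        ∃ a c, IsUnfolding σ.1 a c π.1 := fun ⟨σ, hσ, hσ0⟩ => by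
    obtain ⟨a, c, π, h⟩ := exists_isUnfolding hσ0
    have hπ := (occ123_eq_one_iff π).2 ⟨_, _, _, h.occursOnlyAt hσ⟩
    exact ⟨⟨π, h.involutive, hπ⟩, a, c, h⟩
  choose unfolding a c h using h_unfold
  refine (Nat.card_eq_of_bijective unfolding ⟨fun σ τ hστ => ?_, fun ⟨π, hinv, hocc⟩ => ?_⟩).symm
  · exact Subtype.ext ((h σ).left_unique (hστ ▸ h τ) σ.2.1 τ.2.1)
  · obtain ⟨_, _, _, hπ⟩ := (occ123_eq_one_iff π).1 hocc
    obtain ⟨σ, a', c', hσ, hσπ⟩ := hπ.exists_isUnfolding hinv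
    have hσ0 : σ 0 ≠ Fin.last m := hσπ.apply_zero ▸ Fin.castSucc_ne_last a'
    exact ⟨⟨σ, hσ, hσ0⟩, Subtype.ext ((h _).right_unique hσπ)⟩

end Unfolding

section Ballot

variable {n k : ℕ}

/-- The permutation of `Fin (n + 1)` whose first value is `v` and whose remaining values are in
the same relative order as those of `σ`. -/
def consPerm (v : Fin (n + 1)) (σ : Equiv.Perm (Fin n)) : Equiv.Perm (Fin (n + 1)) :=
  ((finSuccEquiv n).trans (Equiv.optionCongr σ)).trans (finSuccEquiv' v).symm

@[simp] lemma consPerm_zero (v : Fin (n + 1)) (σ : Equiv.Perm (Fin n)) : consPerm v σ 0 = v := by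
  simp [consPerm]

@[simp] lemma consPerm_succ (v : Fin (n + 1)) (σ : Equiv.Perm (Fin n)) (i : Fin n) :
    consPerm v σ i.succ = v.succAbove (σ i) := by
  simp [consPerm]

lemma consPerm_bijective (n : ℕ) : Function.Bijective
    (fun p : Fin (n + 1) × Equiv.Perm (Fin n) => consPerm p.1 p.2) := by
  rw [Fintype.bijective_iff_injective_and_card]
  refine ⟨?_, by simp [Fintype.card_perm, Nat.factorial_succ]⟩
  rintro ⟨v, σ⟩ ⟨w, τ⟩ h
  obtain rfl : v = w := by simpa using DFunLike.congr_fun h 0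
  have hστ : σ = τ := Equiv.ext fun i =>
    Fin.succAbove_right_injective (p := v) (by simpa using DFunLike.congr_fun h i.succ)
  rw [hστ]

lemma card_perm_fin_succ (P : Equiv.Perm (Fin (n + 1)) → Prop) :
    Nat.card {π : Equiv.Perm (Fin (n + 1)) // P π} =
      ∑ v : Fin (n + 1), Nat.card {σ : Equiv.Perm (Fin n) // P (consPerm v σ)} := by
  rw [← Nat.card_sigma]
  exact Nat.card_congr <| .symm <|
    (Equiv.subtypeProdEquivSigmaSubtype fun v σ => P (consPerm v σ)).symm.trans
      ((Equiv.ofBijective _ (consPerm_bijective n)).subtypeEquiv fun _ => Iff.rfl)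

/-- `σ` avoids 123 and its values that are at least `k` appear in decreasing order: exactly what
is needed for `σ` to still avoid 123 when preceded by a new value just below `k`. -/
def Avoids123Below (k : ℕ) (σ : Equiv.Perm (Fin n)) : Prop :=
  Avoids123 σ ∧ StrictAntiOn σ {i | k ≤ (σ i : ℕ)}

/-- The ballot number `(n + 1 - k) / (n + 1) * C(n + k, k)` for `k ≤ n`, in its guise as a number of
123-avoiding permutations. -/
noncomputable def ballot (n k : ℕ) : ℕ :=
  Nat.card {σ : Equiv.Perm (Fin n) // Avoids123Below k σ}

lemma avoids123Below_iff_avoids123 {σ : Equiv.Perm (Fin n)} (h : n ≤ k + 1) :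
    Avoids123Below k σ ↔ Avoids123 σ := by
  refine and_iff_left fun i (hi : k ≤ σ i) j (hj : k ≤ σ j) hij => absurd ?_ hij.ne
  exact σ.injective (Fin.ext (by omega))

lemma ballot_eq_card_avoids123 (h : n ≤ k + 1) :
    ballot n k = Nat.card {σ : Equiv.Perm (Fin n) // Avoids123 σ} := by
  simp only [ballot, avoids123Below_iff_avoids123 h]

lemma lt_succAbove_iff_le_val (v : Fin (n + 1)) (i : Fin n) :
    v < v.succAbove i ↔ (v : ℕ) ≤ i := by
  rw [Fin.lt_succAbove_iff_le_castSucc, Fin.le_def, Fin.val_castSucc]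

lemma avoids123_consPerm (v : Fin (n + 1)) (σ : Equiv.Perm (Fin n)) :
    Avoids123 (consPerm v σ) ↔ Avoids123Below v σ := by
  have h_succ := occurs123_map_iff (Fin.strictMono_succ (n := n)) (Fin.strictMono_succAbove v)
    (consPerm_succ v σ)
  have h_zero (j k : Fin n) : Occurs123 (consPerm v σ) 0 j.succ k.succ ↔
      j < k ∧ (v : ℕ) ≤ σ j ∧ σ j < σ k := by
    simp [Occurs123, lt_succAbove_iff_le_val, Fin.succAbove_lt_succAbove_iff]
  constructor
  · refine fun h => ⟨fun i j k hocc => h _ _ _ ((h_succ i j k).2 hocc), fun i hi j _ hij => ?_⟩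
    by_contra! hle
    exact h _ _ _ ((h_zero i j).2 ⟨hij, hi, lt_of_le_of_ne hle (σ.injective.ne hij.ne)⟩)
  · rintro ⟨h_av, h_anti⟩ i j k hocc
    obtain ⟨j, rfl⟩ := Fin.exists_succ_eq.2 (Fin.ne_zero_of_lt hocc.1)
    obtain ⟨k, rfl⟩ := Fin.exists_succ_eq.2 (Fin.ne_zero_of_lt hocc.2.1)
    cases i using Fin.cases with
    | zero =>
      obtain ⟨hjk, hj, hσ⟩ := (h_zero j k).1 hocc
      exact (h_anti hj (hj.trans hσ.le) hjk).not_gt hσ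
    | succ i => exact h_av i j k ((h_succ i j k).1 hocc)

lemma avoids123Below_consPerm_last (σ : Equiv.Perm (Fin n)) :
    Avoids123Below k (consPerm (Fin.last n) σ) ↔ Avoids123Below k σ := by
  rw [Avoids123Below, avoids123_consPerm, Fin.val_last,
    avoids123Below_iff_avoids123 n.le_succ, Avoids123Below]
  refine and_congr_right fun _ => ⟨fun h i hi j hj hij => ?_, fun h i hi j hj hij => ?_⟩
  · simpa using h (a := i.succ) (by simpa using hi) (b := j.succ) (by simpa using hj)
      (Fin.succ_lt_succ_iff.2 hij)
  · obtain ⟨j, rfl⟩ := Fin.exists_succ_eq.2 (Fin.ne_zero_of_lt hij)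
    cases i using Fin.cases with
    | zero => simp [Fin.castSucc_lt_last]
    | succ i => simpa using h (by simpa using hi) (by simpa using hj) (Fin.succ_lt_succ_iff.1 hij)

lemma avoids123Below_consPerm_castSucc (v : Fin n) (σ : Equiv.Perm (Fin n)) :
    Avoids123Below k (consPerm v.castSucc σ) ↔ (v : ℕ) < k ∧ Avoids123Below v σ := by
  rw [Avoids123Below, avoids123_consPerm, Fin.val_castSucc, and_comm]
  refine and_congr_left fun hσ => ⟨fun h => ?_, fun hvk i hi j hj hij => ?_⟩
  · by_contra! hkv
    obtain ⟨i, hi⟩ := (consPerm v.castSucc σ).surjective (Fin.last n)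
    have hi0 : 0 < i := Fin.pos_of_ne_zero fun e => by
      simp [e, Fin.castSucc_ne_last] at hi
    have hlt := h (a := 0) (by simpa using hkv) (b := i) (hkv.trans (by simp [hi, v.isLt.le])) hi0
    exact hlt.not_ge (hi ▸ Fin.le_last _)
  · have h_val : ∀ x : Fin n, k ≤ (v.castSucc.succAbove (σ x) : ℕ) → (v : ℕ) ≤ σ x := fun x hx =>
      (lt_succAbove_iff_le_val v.castSucc _).1 (Fin.lt_def.2 (hvk.trans_le hx))
    obtain ⟨j, rfl⟩ := Fin.exists_succ_eq.2 (Fin.ne_zero_of_lt hij)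
    cases i using Fin.cases with
    | zero => exact absurd hi (by simpa using hvk)
    | succ i =>
      rw [consPerm_succ, consPerm_succ, Fin.succAbove_lt_succAbove_iff]
      exact hσ.2 (h_val i (by simpa using hi)) (h_val j (by simpa using hj))
        (Fin.succ_lt_succ_iff.1 hij)

lemma ballot_succ (h : k ≤ n) : ballot (n + 1) k = ∑ v ∈ Finset.range (k + 1), ballot n v := by
  have h_term (v : Fin n) : Nat.card {σ // Avoids123Below k (consPerm v.castSucc σ)} =
      if (v : ℕ) < k then ballot n v else 0 := by
    simp only [avoids123Below_consPerm_castSucc]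
    split_ifs with hv <;> simp [hv, ballot]
  rw [ballot, card_perm_fin_succ, Fin.sum_univ_castSucc, Finset.sum_range_succ]
  simp only [h_term, avoids123Below_consPerm_last]
  rw [Fin.sum_univ_eq_sum_range (fun v => if v < k then ballot n v else 0), ← Finset.sum_filter,
    show (Finset.range n).filter (· < k) = Finset.range k by grind]
  rfl

lemma ballot_zero_right (n : ℕ) : ballot n 0 = 1 := by
  induction n with
  | zero =>
    rw [ballot_eq_card_avoids123 (Nat.zero_le _), Nat.card_eq_one_iff_exists]
    exact ⟨⟨1, fun i => i.elim0⟩, fun σ => Subsingleton.elim _ _⟩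
  | succ n ih => simpa [ih] using ballot_succ n.zero_le

lemma ballot_succ_succ (h : k < n) :
    ballot (n + 1) (k + 1) = ballot (n + 1) k + ballot n (k + 1) := by
  rw [ballot_succ h, ballot_succ h.le, Finset.sum_range_succ]

lemma ballot_succ_self (n : ℕ) : ballot (n + 1) (n + 1) = ballot (n + 1) n := by
  rw [ballot_eq_card_avoids123 (by omega), ballot_eq_card_avoids123 le_rfl]

lemma ballot_add_choose (h : k ≤ n) :
    ballot n k + (n + k).choose (n + 1) = (n + k).choose n := by
  induction n generalizing k with
  | zero =>
    obtain rfl := Nat.le_zero.1 h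
    simp [ballot_zero_right]
  | succ n ihn =>
    induction k with
    | zero => simp [ballot_zero_right]
    | succ k ihk =>
      have pascal₁ := Nat.choose_succ_succ (n + k + 1) n
      have pascal₂ := Nat.choose_succ_succ (n + k + 1) (n + 1)
      have hk := ihk (by omega)
      rw [show n + 1 + k = n + k + 1 by ring] at hk
      rw [show n + 1 + (k + 1) = n + k + 1 + 1 by ring]
      rcases (Nat.le_of_succ_le_succ h).lt_or_eq with hkn | rfl
      · have hn := ihn (k := k + 1) hkn
        rw [← add_assoc] at hn
        rw [ballot_succ_succ hkn]
        simp only [Nat.succ_eq_add_one] at pascal₁ pascal₂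
        omega
      · have hsymm : (k + k + 1).choose k = (k + k + 1).choose (k + 1) :=
          Nat.choose_symm_of_eq_add (by omega)
        rw [ballot_succ_self]
        simp only [Nat.succ_eq_add_one] at pascal₁ pascal₂
        omega

theorem ballot_self_eq_catalan (n : ℕ) : ballot n n = catalan n := by
  have h := ballot_add_choose (le_refl n)
  have h_choose := Nat.choose_succ_right_eq (2 * n) n
  have h_catalan := succ_mul_catalan_eq_centralBinom n
  rw [← two_mul] at h
  rw [Nat.centralBinom_eq_two_mul_choose] at h_catalan
  rw [show 2 * n - n = n by omega] at h_choose
  refine Nat.eq_of_mul_eq_mul_left n.succ_pos ?_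
  rw [Nat.succ_eq_add_one]
  linarith [congrArg (fun x => (n + 1) * x) h]

theorem card_avoids123 (n : ℕ) :
    Nat.card {σ : Equiv.Perm (Fin n) // Avoids123 σ} = catalan n := by
  rw [← ballot_self_eq_catalan, ballot_eq_card_avoids123 n.le_succ]

lemma card_avoids123_apply_zero_ne_last_add_catalan (n : ℕ) :
    Nat.card {σ : Equiv.Perm (Fin (n + 1)) // Avoids123 σ ∧ σ 0 ≠ Fin.last n} + catalan n =
      catalan (n + 1) := by
  rw [← card_avoids123, ← card_avoids123, card_perm_fin_succ, card_perm_fin_succ,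
    Fin.sum_univ_castSucc, Fin.sum_univ_castSucc]
  simp [avoids123_consPerm, avoids123Below_iff_avoids123, Fin.castSucc_ne_last]

end Ballot

theorem iCountOnceTotal123_add_catalan (m : ℕ) :
    iCountOnceTotal123 (2 * m + 1) + catalan m = catalan (m + 1) := by
  rw [iCountOnceTotal123_two_mul_add_one, card_avoids123_apply_zero_ne_last_add_catalan]

theorem iCountOnceTotal123_eq_zero_of_even {n : ℕ} (hn : Even n) : iCountOnceTotal123 n = 0 := by
  rw [iCountOnceTotal123, Nat.card_eq_zero]
  refine .inl ⟨fun ⟨π, hinv, hocc⟩ => ?_⟩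
  obtain ⟨_, b, _, h⟩ := (occ123_eq_one_iff π).1 hocc
  exact Nat.not_even_iff_odd.2 ⟨b, OccursOnlyAt.eq_two_mul_add_one h hinv⟩ hn

lemma mul_choose_two_mul_add_three_eq_mul_centralBinom (k : ℕ) :
    (k + 2) * (k + 3) * (2 * k + 3).choose k = (k + 1) * (2 * k + 3) * (k + 1).centralBinom := by
  have h_absorb := Nat.add_one_mul_choose_eq (2 * k + 2) (k + 1)
  have h_step := Nat.choose_succ_right_eq (2 * k + 3) k
  have h_symm : (2 * k + 3).choose (k + 1) = (2 * k + 3).choose (k + 2) :=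
    Nat.choose_symm_of_eq_add (by omega)
  rw [show 2 * k + 3 - k = k + 3 by omega] at h_step
  rw [Nat.centralBinom_eq_two_mul_choose, show 2 * (k + 1) = 2 * k + 2 by ring, mul_assoc (k + 1),
    h_absorb, ← h_symm]
  linear_combination (k + 2) * h_step.symm

lemma mul_eq_three_mul_choose_of_add_catalan_eq {m x : ℕ} (hm : m ≠ 0)
    (hx : x + catalan m = catalan (m + 1)) :
    (2 * m + 1) * x = 3 * (2 * m + 1).choose (m - 1) := by
  obtain ⟨k, rfl⟩ := Nat.exists_eq_succ_of_ne_zero hm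
  have h_catalan₁ := succ_mul_catalan_eq_centralBinom (k + 1)
  have h_catalan₂ := succ_mul_catalan_eq_centralBinom (k + 2)
  have h_central := Nat.succ_mul_centralBinom_succ (k + 1)
  have h_choose := mul_choose_two_mul_add_three_eq_mul_centralBinom k
  rw [Nat.succ_eq_add_one, show 2 * (k + 1) + 1 = 2 * k + 3 by ring, Nat.add_sub_cancel]
  refine Nat.eq_of_mul_eq_mul_left (show 0 < (k + 2) * (k + 3) by positivity) ?_
  zify at *
  linear_combination (2 * k + 3) * (k + 2) * (k + 3) * hx + (2 * k + 3) * (k + 2) * h_catalan₂ +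
    (2 * k + 3) * h_central - (2 * k + 3) * (k + 3) * h_catalan₁ - 3 * h_choose

/-- For every odd `n ≥ 3`, `n · i_n(∅;123) = 3 · C(n, (n-3)/2)`; for every even `n`,
`i_n(∅;123) = 0`. -/
theorem statement11 (n : ℕ) :
    (3 ≤ n → Odd n → n * iCountOnceTotal123 n = 3 * n.choose ((n - 3) / 2)) ∧
    (Even n → iCountOnceTotal123 n = 0) := by
  refine ⟨?_, iCountOnceTotal123_eq_zero_of_even⟩
  rintro hn ⟨m, rfl⟩
  rw [mul_eq_three_mul_choose_of_add_catalan_eq (by omega) (iCountOnceTotal123_add_catalan m),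
    show (2 * m + 1 - 3) / 2 = m - 1 by omega]
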